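/- Proper existential quantification in LPQ⊃,F: for every finite set Γ of formulas, all formulas A1, A2 of LPQ⊃,F(Σ), and every variable x with x not free in Γ ∪ {A2}, Γ ∪ {∃xA1} ⊨ A2 if and only if Γ ∪ {A1} ⊨ A2. -/

import Mathlib

namespace LPQ

/-- The three truth values: true, false, both-true-and-false. -/
inductive TV : Type where
  | t : TV
  | f : TV
  | b : TV
deriving DecidableEq

/-- A first-order signature: function symbols and predicate symbols of each arity. -/
structure Signature : Type 1 where
  Func : ℕ → Type
  Pred : ℕ → Type

/-- Terms over a signature (variables are natural numbers). -/
inductive Term (σ : Signature) : Type where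
  | var : ℕ → Term σ
  | func : {n : ℕ} → σ.Func n → (Fin n → Term σ) → Term σ

/-- Formulas of LPQ⊃,F over a signature. -/
inductive Formula (σ : Signature) : Type where
  | falsum : Formula σ
  | pred : {n : ℕ} → σ.Pred n → (Fin n → Term σ) → Formula σ
  | eq : Term σ → Term σ → Formula σ
  | neg : Formula σ → Formula σ
  | and : Formula σ → Formula σ → Formula σ
  | or : Formula σ → Formula σ → Formula σ
  | imp : Formula σ → Formula σ → Formula σ
  | all : ℕ → Formula σ → Formula σ
  | ex : ℕ → Formula σ → Formula σ

variable {σ : Signature}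

/-- Free variables of a term. -/
def Term.fv : Term σ → Set ℕ
  | .var x => {x}
  | .func _ ts => ⋃ i, (ts i).fv

/-- Free variables of a formula. -/
def Formula.fv : Formula σ → Set ℕ
  | .falsum => ∅
  | .pred _ ts => ⋃ i, (ts i).fv
  | .eq u v => u.fv ∪ v.fv
  | .neg A => A.fv
  | .and A B => A.fv ∪ B.fv
  | .or A B => A.fv ∪ B.fv
  | .imp A B => A.fv ∪ B.fv
  | .all x A => A.fv \ {x}
  | .ex x A => A.fv \ {x}

/-- A structure of LPQ⊃,F(σ): a nonempty domain, interpretations of the function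
symbols, three-valued interpretations of the predicate symbols, and a three-valued
interpretation of equality which is designated on the diagonal. -/
structure Structure (σ : Signature) : Type 1 where
  Dom : Type
  nonempty : Nonempty Dom
  interpFunc : {n : ℕ} → σ.Func n → (Fin n → Dom) → Dom
  interpPred : {n : ℕ} → σ.Pred n → (Fin n → Dom) → TV
  interpEq : Dom → Dom → TV
  interpEq_refl : ∀ d, interpEq d d = TV.t ∨ interpEq d d = TV.b

/-- Value of a term in a structure under an assignment. -/
def Term.eval (M : Structure σ) (α : ℕ → M.Dom) : Term σ → M.Dom
  | .var x => α x
  | .func f ts => M.interpFunc f (fun i => (ts i).eval M α)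

open Classical in
/-- The three-valued interpretation of formulas of LPQ⊃,F. -/
noncomputable def Formula.eval (M : Structure σ) : (ℕ → M.Dom) → Formula σ → TV
  | α, .pred P ts => M.interpPred P (fun i => (ts i).eval M α)
  | α, .eq u v => M.interpEq (u.eval M α) (v.eval M α)
  | _, .falsum => TV.f
  | α, .neg A =>
      match A.eval M α with
      | TV.t => TV.f
      | TV.f => TV.t
      | TV.b => TV.b
  | α, .and A B =>
      match A.eval M α, B.eval M α with
      | TV.t, TV.t => TV.t
      | TV.f, _ => TV.f
      | _, TV.f => TV.f
      | _, _ => TV.b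
  | α, .or A B =>
      match A.eval M α, B.eval M α with
      | TV.t, _ => TV.t
      | _, TV.t => TV.t
      | TV.f, TV.f => TV.f
      | _, _ => TV.b
  | α, .imp A B =>
      match A.eval M α, B.eval M α with
      | TV.f, _ => TV.t
      | _, TV.t => TV.t
      | _, TV.f => TV.f
      | _, _ => TV.b
  | α, .all x A =>
      if ∀ d, Formula.eval M (Function.update α x d) A = TV.t then TV.t
      else if ∃ d, Formula.eval M (Function.update α x d) A = TV.f then TV.f
      else TV.b
  | α, .ex x A =>
      if ∃ d, Formula.eval M (Function.update α x d) A = TV.t then TV.t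
      else if ∀ d, Formula.eval M (Function.update α x d) A = TV.f then TV.f
      else TV.b

/-- Logical consequence of LPQ⊃,F: in every structure under every assignment,
either some premise is false or the conclusion is true or both-true-and-false. -/
def LCon (Γ : Set (Formula σ)) (A : Formula σ) : Prop :=
  ∀ (M : Structure σ) (α : ℕ → M.Dom),
    (∃ B ∈ Γ, B.eval M α = TV.f) ∨ (A.eval M α = TV.t ∨ A.eval M α = TV.b)

/-- Logical equivalence of LPQ⊃,F: the same truth value in every structure
under every assignment. -/
def LEqv (A1 A2 : Formula σ) : Prop :=
  ∀ (M : Structure σ) (α : ℕ → M.Dom), A1.eval M α = A2.eval M α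

end LPQ

namespace LPQ

theorem Term.eval_congr {σ : Signature} (M : Structure σ) (α β : ℕ → M.Dom) (u : Term σ)
    (h : ∀ y ∈ u.fv, α y = β y) : u.eval M α = u.eval M β := by
  induction u with
  | var x => exact h x (by simp [Term.fv])
  | func f ts ih =>
    simp only [Term.eval]
    congr 1
    funext i
    exact ih i (fun y hy => h y (by simp only [Term.fv, Set.mem_iUnion]; exact ⟨i, hy⟩))

theorem Formula.eval_congr {σ : Signature} (M : Structure σ) (A : Formula σ) :
    ∀ (α β : ℕ → M.Dom), (∀ y ∈ A.fv, α y = β y) → A.eval M α = A.eval M β := by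
  have upd : ∀ (α β : ℕ → M.Dom) (x : ℕ) (S : Set ℕ), (∀ y ∈ S \ {x}, α y = β y) →
      ∀ d, ∀ y ∈ S, Function.update α x d y = Function.update β x d y := by
    intro α β x S h d y hy
    by_cases hyx : y = x
    · subst hyx; simp
    · simp only [Function.update_of_ne hyx]
      exact h y ⟨hy, hyx⟩
  induction A with
  | falsum => intro α β _; simp only [Formula.eval]
  | pred P ts =>
    intro α β h
    simp only [Formula.eval]
    congr 1
    funext i
    exact Term.eval_congr M α β _
      (fun y hy => h y (by simp only [Formula.fv, Set.mem_iUnion]; exact ⟨i, hy⟩))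
  | eq u v =>
    intro α β h
    simp only [Formula.eval]
    rw [Term.eval_congr M α β u (fun y hy => h y (Or.inl hy)),
      Term.eval_congr M α β v (fun y hy => h y (Or.inr hy))]
  | neg A ih =>
    intro α β h
    simp only [Formula.eval]
    rw [ih α β h]
  | and A B ihA ihB =>
    intro α β h
    simp only [Formula.eval]
    rw [ihA α β (fun y hy => h y (Or.inl hy)), ihB α β (fun y hy => h y (Or.inr hy))]
  | or A B ihA ihB =>
    intro α β h
    simp only [Formula.eval]
    rw [ihA α β (fun y hy => h y (Or.inl hy)), ihB α β (fun y hy => h y (Or.inr hy))]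
  | imp A B ihA ihB =>
    intro α β h
    simp only [Formula.eval]
    rw [ihA α β (fun y hy => h y (Or.inl hy)), ihB α β (fun y hy => h y (Or.inr hy))]
  | all x A ih =>
    intro α β h
    have e := fun d => ih _ _ (upd α β x A.fv h d)
    simp only [Formula.eval]
    have e1 : (∀ d, Formula.eval M (Function.update α x d) A = TV.t) ↔
        ∀ d, Formula.eval M (Function.update β x d) A = TV.t := by simp only [e]
    have e2 : (∃ d, Formula.eval M (Function.update α x d) A = TV.f) ↔
        ∃ d, Formula.eval M (Function.update β x d) A = TV.f := by simp only [e]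
    rw [propext e1, propext e2]
  | ex x A ih =>
    intro α β h
    have e := fun d => ih _ _ (upd α β x A.fv h d)
    simp only [Formula.eval]
    have e1 : (∀ d, Formula.eval M (Function.update α x d) A = TV.f) ↔
        ∀ d, Formula.eval M (Function.update β x d) A = TV.f := by simp only [e]
    have e2 : (∃ d, Formula.eval M (Function.update α x d) A = TV.t) ↔
        ∃ d, Formula.eval M (Function.update β x d) A = TV.t := by simp only [e]
    rw [propext e1, propext e2]

theorem Formula.eval_update {σ : Signature} (M : Structure σ) (A : Formula σ) (α : ℕ → M.Dom)
    (x : ℕ) (d : M.Dom) (hx : x ∉ A.fv) : A.eval M (Function.update α x d) = A.eval M α :=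
  Formula.eval_congr M A _ _ (fun y hy => by
    have hne : y ≠ x := fun h => hx (h ▸ hy)
    exact Function.update_of_ne hne _ _)

theorem Formula.eval_ex_f {σ : Signature} (M : Structure σ) (A : Formula σ) (α : ℕ → M.Dom)
    (x : ℕ) : (Formula.ex x A).eval M α = TV.f ↔
      ∀ d, A.eval M (Function.update α x d) = TV.f := by
  simp only [Formula.eval]
  split_ifs with h1 h2
  · obtain ⟨d, hd⟩ := h1
    refine ⟨fun h => h.elim, fun h => ?_⟩
    rw [h d] at hd
    cases hd
  · simp [h2]
  · simp [h2]

/-- **Proper existential quantification in LPQ⊃,F**: for every finite set Γ of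
formulas, all formulas A1, A2 and every variable x not free in Γ ∪ {A2},
Γ ∪ {∃xA1} ⊨ A2 iff Γ ∪ {A1} ⊨ A2. -/
theorem proper_existential_quantification (σ : Signature) (Γ : Set (Formula σ))
    (hΓ : Γ.Finite) (A1 A2 : Formula σ) (x : ℕ)
    (hx : ∀ B ∈ Γ, x ∉ Formula.fv B) (hx2 : x ∉ Formula.fv A2) :
    LCon (Γ ∪ {Formula.ex x A1}) A2 ↔ LCon (Γ ∪ {A1}) A2 := by
  constructor
  · intro H M α
    rcases H M α with ⟨B, hB, hf⟩ | h
    · left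
      rcases hB with hB | hB
      · exact ⟨B, Or.inl hB, hf⟩
      · rw [Set.mem_singleton_iff] at hB
        subst hB
        refine ⟨A1, Or.inr rfl, ?_⟩
        have := (Formula.eval_ex_f M A1 α x).1 hf (α x)
        rwa [Function.update_eq_self] at this
    · exact Or.inr h
  · intro H M α
    by_cases hA : A2.eval M α = TV.t ∨ A2.eval M α = TV.b
    · exact Or.inr hA
    left
    by_cases hG : ∃ B ∈ Γ, B.eval M α = TV.f
    · obtain ⟨B, hB, hf⟩ := hG
      exact ⟨B, Or.inl hB, hf⟩
    refine ⟨_, Or.inr rfl, (Formula.eval_ex_f M A1 α x).2 fun d => ?_⟩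
    rcases H M (Function.update α x d) with ⟨B, hB, hf⟩ | h
    · rcases hB with hB | hB
      · rw [Formula.eval_update M B α x d (hx B hB)] at hf
        exact absurd ⟨B, hB, hf⟩ hG
      · rw [Set.mem_singleton_iff] at hB
        rwa [hB] at hf
    · rw [Formula.eval_update M A2 α x d hx2] at h
      exact absurd h hA

end LPQ
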